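/- arXiv:2202.06711 — 2 statements merged into one kernel-verified Lean document; each statement's English description precedes it below -/
import Mathlib

section
/- Let 𝓔 be an abelian category, n ≥ 1, and M an n-cluster tilting subcategory of 𝓔. Suppose that for every object Y ∈ M and every n-exact sequence X : X⁰ → X¹ → ⋯ → Xⁿ → X^{n+1} in M, the induced sequence of abelian groups 0 → Hom(X^{n+1},Y) → Hom(Xⁿ,Y) → ⋯ → Hom(X⁰,Y) → Extⁿ(X^{n+1},Y) → ⋯ → Extⁿ(X⁰,Y) → Ext²ⁿ(X^{n+1},Y) → ⋯ is exact at every spot (maps within each row induced by the differentials of X, and each connecting map Ext^{kn}(X⁰,Y) → Ext^{(k+1)n}(X^{n+1},Y) given by Yoneda precomposition with [X] ∈ Extⁿ(X^{n+1},X⁰)). Then M is an nℤ-cluster tilting subcategory, i.e., Ext^k(X,Y)=0 for all X,Y ∈ M and all k ≥ 1 not divisible by n. -/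
open CategoryTheory CategoryTheory.Abelian CategoryTheory.Limits

universe w v u

namespace NZPaper

variable {C : Type u} [Category.{v} C] [Abelian C] [HasExt.{w} C]

/-- A full (iso-closed) subcategory, encoded as a set of objects, is `n`-cluster tilting if it
admits monic left approximations and epic right approximations and is characterized by the
vanishing of `Ext^i` for `1 ≤ i ≤ n-1` on either side. -/
def IsNClusterTilting (n : ℕ) (M : Set C) : Prop :=
  (∀ ⦃X Y : C⦄, (X ≅ Y) → X ∈ M → Y ∈ M) ∧
  (∀ E : C, ∃ (X : C) (f : E ⟶ X), X ∈ M ∧ Mono f ∧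
      ∀ X' ∈ M, ∀ g : E ⟶ X', ∃ h : X ⟶ X', f ≫ h = g) ∧
  (∀ E : C, ∃ (X : C) (f : X ⟶ E), X ∈ M ∧ Epi f ∧
      ∀ X' ∈ M, ∀ g : X' ⟶ E, ∃ h : X' ⟶ X, h ≫ f = g) ∧
  (∀ E : C, E ∈ M ↔ ∀ Y ∈ M, ∀ i : ℕ, 1 ≤ i → i < n → ∀ e : Ext E Y i, e = 0) ∧
  (∀ E : C, E ∈ M ↔ ∀ Y ∈ M, ∀ i : ℕ, 1 ≤ i → i < n → ∀ e : Ext Y E i, e = 0)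

/-- An `nℤ`-cluster tilting subcategory: in addition `Ext^k` vanishes on `M` for every
`k ≥ 1` not divisible by `n`. -/
def IsNZClusterTilting (n : ℕ) (M : Set C) : Prop :=
  IsNClusterTilting n M ∧
  ∀ X ∈ M, ∀ Y ∈ M, ∀ k : ℕ, 1 ≤ k → ¬ (n ∣ k) → ∀ e : Ext X Y k, e = 0

/-- An exact sequence `0 → Y 0 → Y 1 → ⋯ → Y m → Y (m+1) → 0` in an abelian category,
recorded together with its canonical splicing into short exact sequences
`0 → K i → Y (i+1) → K (i+1) → 0` (`K i` is the image of `d i` for `1 ≤ i ≤ m`,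
`K 0 = Y 0` and `K m = Y (m+1)`).  Only the indices `0, …, m+1` (resp. `0, …, m`) of
`Y` (resp. of the differentials and of `K`) are relevant; the remaining values are junk
(any such exact sequence can be padded by zero objects). -/
structure ExactExtension (C : Type u) [Category.{v} C] [Abelian C] (m : ℕ) where
  Y : ℕ → C
  d : ∀ i, Y i ⟶ Y (i + 1)
  K : ℕ → C
  ι : ∀ i, K i ⟶ Y (i + 1)
  π : ∀ i, Y i ⟶ K i
  hK0 : K 0 = Y 0
  hKm : K m = Y (m + 1)
  zero : ∀ i, ι i ≫ π (i + 1) = 0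
  shortExact : ∀ i, (ShortComplex.mk (ι i) (π (i + 1)) (zero i)).ShortExact
  d0_eq : eqToHom hK0 ≫ d 0 = ι 0
  dmid_eq : ∀ i, 1 ≤ i → i + 1 ≤ m → d i = π i ≫ ι i
  dlast_eq : d m = π m ≫ eqToHom hKm

/-- The Yoneda class of the chain of the first `j` short exact sequences,
obtained as the Yoneda composite of their `Ext¹`-classes. -/
noncomputable def ExactExtension.chainClass {m : ℕ} (T : ExactExtension C m) :
    ∀ j : ℕ, Ext (T.K j) (T.K 0) j
  | 0 => Ext.mk₀ (𝟙 _)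
  | (j + 1) => ((T.shortExact j).extClass).comp (T.chainClass j) (by omega)

/-- The Yoneda class `[ξ] ∈ Ext^m (Y (m+1)) (Y 0)` of the exact sequence
`0 → Y 0 → ⋯ → Y (m+1) → 0`, i.e. the Yoneda composite of the `Ext¹`-classes of the
short exact sequences obtained by splicing it at its images. -/
noncomputable def ExactExtension.extClass {m : ℕ} (T : ExactExtension C m) :
    Ext (T.Y (m + 1)) (T.Y 0) m :=
  (Ext.mk₀ (eqToHom T.hKm.symm)).comp
    ((T.chainClass m).comp (Ext.mk₀ (eqToHom T.hK0)) (add_zero m)) (zero_add m)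

/-- Transport of an `Ext`-class along equalities of objects. -/
noncomputable def extTransport {X X' Z Z' : C} {a : ℕ} (e : Ext X Z a)
    (hX : X = X') (hZ : Z = Z') : Ext X' Z' a :=
  (Ext.mk₀ (eqToHom hX.symm)).comp (e.comp (Ext.mk₀ (eqToHom hZ)) (add_zero a)) (zero_add a)

/-- Exactness, at every spot, of the long sequence of abelian groups
`0 → Hom(X,Y⁰) → ⋯ → Hom(X,Y^{n+1}) → Extⁿ(X,Y⁰) → ⋯ → Extⁿ(X,Y^{n+1}) → Ext^{2n}(X,Y⁰) → ⋯`
(`Ext⁰ = Hom`), where within each row the maps are induced by the differentials of `T` and each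
connecting map `Ext^{kn}(X,Y^{n+1}) → Ext^{(k+1)n}(X,Y⁰)` is Yoneda composition with the class
`[T] ∈ Extⁿ(Y^{n+1},Y⁰)`. -/
def CovLES (n : ℕ) (X : C) (T : ExactExtension C n) : Prop :=
  (Function.Injective fun e : Ext X (T.Y 0) 0 => e.comp (Ext.mk₀ (T.d 0)) (add_zero 0)) ∧
  (∀ k i : ℕ, i < n → Function.Exact
      (fun e : Ext X (T.Y i) (k * n) => e.comp (Ext.mk₀ (T.d i)) (add_zero _))
      (fun e : Ext X (T.Y (i + 1)) (k * n) => e.comp (Ext.mk₀ (T.d (i + 1))) (add_zero _))) ∧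
  (∀ k : ℕ, Function.Exact
      (fun e : Ext X (T.Y n) (k * n) => e.comp (Ext.mk₀ (T.d n)) (add_zero _))
      (fun e : Ext X (T.Y (n + 1)) (k * n) =>
        e.comp T.extClass (show k * n + n = (k + 1) * n by ring))) ∧
  (∀ k : ℕ, Function.Exact
      (fun e : Ext X (T.Y (n + 1)) (k * n) =>
        e.comp T.extClass (show k * n + n = (k + 1) * n by ring))
      (fun e : Ext X (T.Y 0) ((k + 1) * n) => e.comp (Ext.mk₀ (T.d 0)) (add_zero _)))

/-- Exactness, at every spot, of the long sequence of abelian groups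
`0 → Hom(Y^{n+1},Z) → ⋯ → Hom(Y⁰,Z) → Extⁿ(Y^{n+1},Z) → ⋯ → Extⁿ(Y⁰,Z) → Ext^{2n}(Y^{n+1},Z) → ⋯`
(`Ext⁰ = Hom`), where within each row the maps are induced by the differentials of `T` and each
connecting map `Ext^{kn}(Y⁰,Z) → Ext^{(k+1)n}(Y^{n+1},Z)` is Yoneda precomposition with the class
`[T] ∈ Extⁿ(Y^{n+1},Y⁰)`. -/
def ContraLES (n : ℕ) (Z : C) (T : ExactExtension C n) : Prop :=
  (Function.Injective fun e : Ext (T.Y (n + 1)) Z 0 => (Ext.mk₀ (T.d n)).comp e (zero_add 0)) ∧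
  (∀ k i : ℕ, i < n → Function.Exact
      (fun e : Ext (T.Y (i + 2)) Z (k * n) => (Ext.mk₀ (T.d (i + 1))).comp e (zero_add _))
      (fun e : Ext (T.Y (i + 1)) Z (k * n) => (Ext.mk₀ (T.d i)).comp e (zero_add _))) ∧
  (∀ k : ℕ, Function.Exact
      (fun e : Ext (T.Y 1) Z (k * n) => (Ext.mk₀ (T.d 0)).comp e (zero_add _))
      (fun e : Ext (T.Y 0) Z (k * n) =>
        T.extClass.comp e (show n + k * n = (k + 1) * n by ring))) ∧
  (∀ k : ℕ, Function.Exact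
      (fun e : Ext (T.Y 0) Z (k * n) =>
        T.extClass.comp e (show n + k * n = (k + 1) * n by ring))
      (fun e : Ext (T.Y (n + 1)) Z ((k + 1) * n) => (Ext.mk₀ (T.d n)).comp e (zero_add _)))

end NZPaper

namespace NZPaper

lemma complex_efface {C : Type u} [Category.{v} C] [Abelian C]
    {X : C} {K : CochainComplex C ℤ} {i : ℤ}
    (π : K ⟶ (HomologicalComplex.single C (ComplexShape.up ℤ) i).obj X) [K.IsStrictlyLE i] [QuasiIsoAt π i] :
    ∃ (p : K.X i ⟶ X) (φ : (HomologicalComplex.single C (ComplexShape.up ℤ) i).obj (K.X i) ⟶ K),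
      Epi p ∧ φ ≫ π = (HomologicalComplex.single C (ComplexShape.up ℤ) i).map p := by
  let e := K.iCyclesIso i (i + 1) (by simp)
    ((K.isZero_of_isStrictlyLE i (i + 1) (by simp)).eq_of_tgt _ _)
  let α := e.inv ≫ K.homologyπ i ≫ HomologicalComplex.homologyMap π i ≫
    (HomologicalComplex.singleObjHomologySelfIso (ComplexShape.up ℤ) i X).hom
  have : π.f i = α ≫ (HomologicalComplex.singleObjXSelf (ComplexShape.up ℤ) i X).inv := by
    rw [← cancel_epi e.hom]
    dsimp only [α, e]
    rw [Category.assoc, Category.assoc, Category.assoc,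
      Iso.hom_inv_id_assoc,
      HomologicalComplex.homologyπ_naturality_assoc]
    rw [HomologicalComplex.homologyπ_singleObjHomologySelfIso_hom_assoc]
    rw [← HomologicalComplex.singleObjCyclesSelfIso_inv_iCycles]
    rw [Iso.hom_inv_id_assoc, HomologicalComplex.cyclesMap_i]
    rfl
  refine ⟨α, HomologicalComplex.mkHomFromSingle (𝟙 _) (by
      intro j hj
      have hj' : i + 1 = j := hj
      exact (K.isZero_of_isStrictlyLE i j (by lia)).eq_of_tgt _ _), ?_, ?_⟩
  · dsimp only [α]
    infer_instance
  · apply HomologicalComplex.from_single_hom_ext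
    rw [HomologicalComplex.comp_f, HomologicalComplex.mkHomFromSingle_f, this]
    rw [HomologicalComplex.single_map_f_self]
    simp

lemma efface {C : Type u} [Category.{v} C] [Abelian C] [HasExt.{w} C]
    {X Y : C} {n : ℕ} (e : Ext X Y (n + 1)) :
    ∃ (E : C) (p : E ⟶ X), Epi p ∧ (Ext.mk₀ p).comp e (zero_add _) = 0 := by
  let := HasDerivedCategory.standard C
  let ψ : DerivedCategory.Q.obj ((CochainComplex.singleFunctor C 0).obj X) ⟶
      DerivedCategory.Q.obj ((CochainComplex.singleFunctor C (-(n+1))).obj Y) :=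
    e.hom ≫ (((DerivedCategory.singleFunctors C).shiftIso (n + 1) (-(n + 1)) 0
    (by lia)).hom.app _)
  obtain ⟨K, _, s, h, g, hg⟩ := DerivedCategory.right_fac_of_isStrictlyLE ψ 0
  have hs := h
  rw [DerivedCategory.isIso_Q_map_iff_quasiIso] at hs
  have hs0 : QuasiIsoAt s 0 := inferInstance
  obtain ⟨p, φ, hp, hφ⟩ : ∃ (p : K.X 0 ⟶ X)
      (φ : (CochainComplex.singleFunctor C 0).obj (K.X 0) ⟶ K),
      Epi p ∧ φ ≫ s = (CochainComplex.singleFunctor C 0).map p :=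
    @complex_efface C _ _ X K 0 s _ hs0
  refine ⟨_, p, hp, ?_⟩
  have h0 : φ ≫ g = 0 := by
    apply HomologicalComplex.from_single_hom_ext
    apply (((CochainComplex.singleFunctor C (-(n+1))).obj Y).isZero_of_isStrictlyLE
      (-(n+1)) 0 (by lia)).eq_of_tgt
  have h1 : DerivedCategory.Q.map ((CochainComplex.singleFunctor C 0).map p) ≫ ψ = 0 := by
    have h3 : DerivedCategory.Q.map ((CochainComplex.singleFunctor C 0).map p) =
        DerivedCategory.Q.map φ ≫ DerivedCategory.Q.map s := by
      rw [← Functor.map_comp]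
      exact congrArg DerivedCategory.Q.map hφ.symm
    rw [hg, h3, Category.assoc, IsIso.hom_inv_id_assoc,
      ← Functor.map_comp, h0, Functor.map_zero]
  apply Ext.homEquiv.injective
  have h2 : (DerivedCategory.singleFunctor C 0).map p ≫ e.hom = 0 := by
    rw [← cancel_mono (((DerivedCategory.singleFunctors C).shiftIso (n + 1) (-(n + 1)) 0
    (by lia)).hom.app _), Category.assoc, zero_comp]
    exact h1
  change Ext.hom _ = Ext.hom _
  rw [Ext.comp_hom, Ext.mk₀_hom, Ext.zero_hom, ShiftedHom.mk₀_comp, h2]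


/-- Spliced short exact sequences `K i → Z i → K (i+1)`. -/
structure Splice (C : Type u) [Category.{v} C] [Abelian C] where
  K : ℕ → C
  Z : ℕ → C
  ι : ∀ i, K i ⟶ Z i
  p : ∀ i, Z i ⟶ K (i + 1)
  zero : ∀ i, ι i ≫ p i = 0
  se : ∀ i, (ShortComplex.mk (ι i) (p i) (zero i)).ShortExact

/-- Add one short exact sequence on the left. -/
def Splice.cons {C : Type u} [Category.{v} C] [Abelian C] (S : Splice C) {N A : C}
    (f : N ⟶ A) (g : A ⟶ S.K 0) (w : f ≫ g = 0) (h : (ShortComplex.mk f g w).ShortExact) :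
    Splice C where
  K := fun i => match i with
    | 0 => N
    | j + 1 => S.K j
  Z := fun i => match i with
    | 0 => A
    | j + 1 => S.Z j
  ι := fun i => match i with
    | 0 => f
    | j + 1 => S.ι j
  p := fun i => match i with
    | 0 => g
    | j + 1 => S.p j
  zero := fun i => match i with
    | 0 => w
    | j + 1 => S.zero j
  se := fun i => match i with
    | 0 => h
    | j + 1 => S.se j

open ZeroObject in
/-- The padding by zeros. -/
noncomputable def Splice.triv (C : Type u) [Category.{v} C] [Abelian C] : Splice C where
  K := fun _ => 0
  Z := fun _ => 0
  ι := fun _ => 0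
  p := fun _ => 0
  zero := fun _ => by simp
  se := fun _ =>
    { exact := ShortComplex.exact_of_isZero_X₂ _ (isZero_zero C)
      mono_f := ⟨fun _ _ _ => (isZero_zero C).eq_of_tgt _ _⟩
      epi_g := ⟨fun _ _ _ => (isZero_zero C).eq_of_src _ _⟩ }

/-- The associated exact extension. -/
def Splice.toExt {C : Type u} [Category.{v} C] [Abelian C] (S : Splice C) (n : ℕ)
    (h : S.K n = S.Z n) (hι : S.ι n = eqToHom h) : ExactExtension C n where
  Y := fun i => match i with
    | 0 => S.K 0
    | j + 1 => S.Z j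
  d := fun i => match i with
    | 0 => S.ι 0
    | j + 1 => S.p j ≫ S.ι (j + 1)
  K := S.K
  ι := S.ι
  π := fun i => match i with
    | 0 => 𝟙 _
    | j + 1 => S.p j
  hK0 := rfl
  hKm := h
  zero := S.zero
  shortExact := S.se
  d0_eq := by simp
  dmid_eq := fun i hi _ => match i, hi with
    | j + 1, _ => rfl
  dlast_eq := by
    cases n with
    | zero => simp [hι]
    | succ n => simp [hι]

open ZeroObject in
lemma exists_splice {C : Type u} [Category.{v} C] [Abelian C] [HasExt.{w} C]
    (n : ℕ) (M : Set C) (hM : IsNClusterTilting n M) {X Y : C} (hX : X ∈ M) {k : ℕ}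
    (e : Ext X Y (k + 1)) (j : ℕ) (hj : j + 1 ≤ n) :
    ∃ (S : Splice C) (h : S.K (j + 1) = S.Z (j + 1)) (_ : S.ι (j + 1) = eqToHom h)
      (hXK : S.K (j + 1) = X),
      (∀ i, S.Z i ∈ M) ∧
      (∀ A ∈ M, ∀ i, 1 ≤ i → i ≤ j → ∀ x : Ext A (S.K 0) i, x = 0) ∧
      (Ext.mk₀ (S.p j)).comp ((Ext.mk₀ (eqToHom hXK)).comp e (zero_add _)) (zero_add _) = 0 := by
  obtain ⟨-, -, hR, hM1, hM2⟩ := hM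
  induction j with
  | zero =>
    obtain ⟨E, p, hp, hpe⟩ := efface e
    obtain ⟨A, q, hA, hq, -⟩ := hR E
    have h0 : (0 : C) ∈ M := by
      rw [hM1]
      intro Y _ i _ _ x
      rw [← Ext.mk₀_id_comp x, (isZero_zero C).eq_of_src (𝟙 _) 0, Ext.mk₀_zero, Ext.zero_comp]
    have : Epi (q ≫ p) := epi_comp _ _
    refine ⟨((Splice.triv C).cons (𝟙 X) (0 : X ⟶ (Splice.triv C).K 0) comp_zero
        { exact := ?_
          mono_f := inferInstance
          epi_g := ⟨fun _ _ _ => (isZero_zero C).eq_of_src _ _⟩ }).cons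
        (kernel.ι (q ≫ p)) (q ≫ p) (kernel.condition _)
        { exact := ShortComplex.exact_kernel _
          mono_f := inferInstance
          epi_g := this }, rfl, (eqToHom_refl X rfl).symm, rfl, ?_, ?_, ?_⟩
    · rw [ShortComplex.exact_iff_epi]
      · dsimp only; infer_instance
      · rfl
    · rintro (_ | _ | i)
      · exact hA
      · exact hX
      · exact h0
    · intro A _ i hi hi'
      omega
    · change (Ext.mk₀ (q ≫ p)).comp ((Ext.mk₀ (𝟙 X)).comp e (zero_add _)) (zero_add _) = 0
      rw [Ext.mk₀_id_comp, ← Ext.mk₀_comp_mk₀_assoc, hpe, Ext.comp_zero]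
  | succ j ih =>
    obtain ⟨S, h, hι, hXK, hZ, hK, he⟩ := ih (by omega)
    obtain ⟨A, q, hA, hq, hlift⟩ := hR (S.K 0)
    have hse : (ShortComplex.mk (kernel.ι q) q (kernel.condition q)).ShortExact :=
      { exact := ShortComplex.exact_kernel _
        mono_f := inferInstance
        epi_g := hq }
    refine ⟨S.cons (kernel.ι q) q (kernel.condition q) hse, h, hι, hXK, ?_, ?_, he⟩
    · rintro (_ | i)
      · exact hA
      · exact hZ i
    · intro B hB i hi hi' x
      change Ext B (kernel q) i at x
      obtain ⟨i, rfl⟩ : ∃ i', i = i' + 1 := ⟨i - 1, by omega⟩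
      obtain ⟨y, rfl⟩ := Ext.covariant_sequence_exact₁ B hse x
        ((hM2 A).1 hA B hB (i + 1) (by omega) (by omega) _) rfl
      rcases Nat.eq_zero_or_pos i with rfl | hi0
      · obtain ⟨f, rfl⟩ := (Ext.mk₀_bijective _ _).2 y
        obtain ⟨g, rfl⟩ := hlift B hB f
        have := hse.comp_extClass
        dsimp only at this
        rw [← Ext.mk₀_comp_mk₀, Ext.comp_assoc_of_second_deg_zero, this, Ext.comp_zero]
        rfl
      · have : y = 0 := hK B hB i hi0 (by omega) y
        rw [this, Ext.zero_comp]
        rfl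

lemma main_claim {C : Type u} [Category.{v} C] [Abelian C] [HasExt.{w} C]
    (n : ℕ) (hn : 1 ≤ n) (M : Set C) (T : ExactExtension C n) (hT : ∀ i ≤ n + 1, T.Y i ∈ M)
    (Y : C) (hY : Y ∈ M) (hles : ContraLES n Y T) (m : ℕ) (hm : 1 ≤ m) (hnm : ¬ n ∣ m)
    (IH : ∀ k < m + n, 1 ≤ k → ¬ n ∣ k → ∀ X ∈ M, ∀ e : Ext X Y k, e = 0) :
    ∀ a ≤ n, ∀ e : Ext (T.K a) Y (m + a), (Ext.mk₀ (T.π a)).comp e (zero_add _) = 0 → e = 0 := by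
  intro a
  induction a with
  | zero =>
    intro _ e _
    refine IH m ?_ hm hnm _ ?_ e
    · omega
    · rw [T.hK0]; exact hT 0 (by omega)
  | succ a ih =>
    intro ha e he
    obtain ⟨e', rfl⟩ := Ext.contravariant_sequence_exact₃ (T.shortExact a) Y e he
      (n₀ := m + a) (by omega)
    have ihn := ih (by omega)
    by_cases hdiv : n ∣ m + a
    · obtain ⟨c, hc⟩ := hdiv
      obtain ⟨b, rfl⟩ : ∃ b, a = b + 1 := by
        refine ⟨a - 1, ?_⟩
        have : a ≠ 0 := by
          rintro rfl
          exact hnm ⟨c, hc⟩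
        omega
      rw [mul_comm] at hc
      have hd : T.d b ≫ T.π (b + 1) = 0 := by
        rcases Nat.eq_zero_or_pos b with rfl | hb
        · rw [← cancel_epi (eqToHom T.hK0), ← Category.assoc, T.d0_eq, T.zero, comp_zero]
        · rw [T.dmid_eq b hb (by omega), Category.assoc, T.zero, comp_zero]
      have hd' := T.dmid_eq (b + 1) (by omega) (by omega)
      have key : ∀ (N : ℕ) (hN : N = m + (b + 1)), N = c * n → 
          ∀ f : Ext (T.Y (b + 1)) Y N, (Ext.mk₀ (T.d b)).comp f (zero_add _) = 0 →
          ∃ g : Ext (T.Y (b + 2)) Y N, (Ext.mk₀ (T.d (b + 1))).comp g (zero_add _) = f := by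
        rintro N hN rfl f hf
        exact (hles.2.1 c b (by omega) f).1 hf
      obtain ⟨g, hg⟩ := key _ rfl hc ((Ext.mk₀ (T.π (b + 1))).comp e' (zero_add _)) (by
        rw [Ext.mk₀_comp_mk₀_assoc, hd, Ext.mk₀_zero, Ext.zero_comp])
      rw [hd', ← Ext.mk₀_comp_mk₀_assoc] at hg
      have h2 := ihn (e' - (Ext.mk₀ (T.ι (b + 1))).comp g (zero_add _)) (by
        rw [sub_eq_add_neg, Ext.comp_add, Ext.comp_neg, hg, add_neg_cancel])
      rw [sub_eq_zero] at h2
      rw [h2]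
      exact (T.shortExact (b + 1)).extClass_comp_assoc g
    · have : e' = 0 := ihn e' (IH _ (by omega) (by omega) hdiv _ (hT _ (by omega)) _)
      rw [this, Ext.comp_zero]

/-- Let `𝓔` be an abelian category, `n ≥ 1`, and `M` an `n`-cluster tilting
subcategory of `𝓔`.  If for every `Y ∈ M` and every `n`-exact sequence `X` in `M` the induced
contravariant long sequence of `Ext`-groups is exact at every spot, then `M` is an `nℤ`-cluster
tilting subcategory, i.e. `Ext^k(X,Y) = 0` for all `X, Y ∈ M` and all `k ≥ 1` not divisible
by `n`. -/
theorem nZ_cluster_tilting_of_contravariant_les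
    {C : Type u} [Category.{v} C] [Abelian C] [HasExt.{w} C]
    (n : ℕ) (hn : 1 ≤ n) (M : Set C) (hM : IsNClusterTilting n M)
    (H : ∀ T : ExactExtension C n, (∀ i ≤ n + 1, T.Y i ∈ M) →
      ∀ Y ∈ M, ContraLES n Y T) :
    ∀ X ∈ M, ∀ Y ∈ M, ∀ k : ℕ, 1 ≤ k → ¬ (n ∣ k) → ∀ e : Ext X Y k, e = 0 := by
  intro X hX Y hY k
  induction k using Nat.strong_induction_on generalizing X with
  | _ k IH =>
  intro hk hnk e
  rcases lt_or_ge k n with hlt | hge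
  · exact (hM.2.2.2.1 X).1 hX Y hY k hk hlt e
  obtain ⟨m, rfl⟩ : ∃ m, k = m + n := ⟨k - n, by omega⟩
  obtain ⟨j, rfl⟩ : ∃ j, n = j + 1 := ⟨n - 1, by omega⟩
  have hnm : ¬ (j + 1) ∣ m := fun h => hnk (Dvd.dvd.add h (dvd_refl _))
  have hm : 1 ≤ m := by
    rcases Nat.eq_zero_or_pos m with rfl | h
    · exact absurd (dvd_zero _) hnm
    · exact h
  obtain ⟨S, h, hι, hXK, hZ, hK, he⟩ :=
    exists_splice (j + 1) M hM hX (k := m + j) e j le_rfl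
  have hK0 : S.K 0 ∈ M := (hM.2.2.2.2 _).2 fun A hA i hi hi' x => hK A hA i hi (by omega) x
  have hT : ∀ i ≤ j + 1 + 1, (S.toExt (j + 1) h hι).Y i ∈ M := by
    rintro (_ | i) _
    · exact hK0
    · exact hZ i
  have h1 := main_claim (j + 1) hn M (S.toExt (j + 1) h hι) hT Y hY (H _ hT Y hY) m hm hnm
    (fun k hk h1 h2 X hX e => IH k hk X hX h1 h2 e) (j + 1) le_rfl
    ((Ext.mk₀ (eqToHom hXK)).comp e (zero_add _)) he
  subst hXK
  rw [eqToHom_refl] at h1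
  exact (Ext.mk₀_id_comp e).symm.trans h1

end NZPaper
end

section
/- Let 𝓔 be an abelian category, n ≥ 1, and M an n-cluster tilting subcategory of 𝓔. Let X : 0 → X⁰ → X¹ → ⋯ → Xⁿ → X^{n+1} → 0 and Y : 0 → X⁰ → Y¹ → ⋯ → Yⁿ → X^{n+1} → 0 be two n-exact sequences in M with the same end terms X⁰ and X^{n+1}, and suppose their Yoneda classes in Extⁿ(X^{n+1},X⁰) are equal. Then X and Y are homotopy equivalent: there exists a morphism of complexes X → Y which is the identity on X⁰ and on X^{n+1} and which is a homotopy equivalence of complexes. -/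
open CategoryTheory CategoryTheory.Abelian CategoryTheory.Limits

universe w v u

namespace NZPaper

section Helpers

variable {C : Type u} [Category.{v} C] [Abelian C] [HasExt.{w} C]

def ExtVan (n : ℕ) (M : Set C) : Prop :=
  ∀ X ∈ M, ∀ Y ∈ M, ∀ i : ℕ, 1 ≤ i → i < n → ∀ e : Ext X Y i, e = 0

variable {n : ℕ} {M : Set C}

lemma epi_pi (T : ExactExtension C n) (j : ℕ) : Epi (T.π (j + 1)) := (T.shortExact j).epi_g

lemma mono_iota (T : ExactExtension C n) (j : ℕ) : Mono (T.ι j) := (T.shortExact j).mono_f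

lemma K0_mem (T : ExactExtension C n) (hT : ∀ i ≤ n + 1, T.Y i ∈ M) : T.K 0 ∈ M := by
  rw [T.hK0]; exact hT 0 (by omega)

lemma Kn_mem (T : ExactExtension C n) (hT : ∀ i ≤ n + 1, T.Y i ∈ M) : T.K n ∈ M := by
  rw [T.hKm]; exact hT (n + 1) (by omega)

lemma ext_K_van (hV : ExtVan.{w} n M) (T : ExactExtension C n) (hT : ∀ i ≤ n + 1, T.Y i ∈ M)
    {Z : C} (hZ : Z ∈ M) :
    ∀ k j : ℕ, j + k = n → ∀ i, 1 ≤ i → i < j → ∀ e : Ext (T.K j) Z i, e = 0 := by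
  intro k
  induction k with
  | zero =>
    intro j hj i h1 h2 e
    obtain rfl : j = n := by omega
    exact hV _ (Kn_mem T hT) _ hZ i h1 h2 e
  | succ k ih =>
    intro j hj i h1 h2 e
    obtain ⟨e', he'⟩ := Ext.contravariant_sequence_exact₁ (T.shortExact j) Z e
      (n₁ := i + 1) (by omega) (ih (j + 1) (by omega) (i + 1) (by omega) (by omega) _)
    have h0 : e' = 0 := hV _ (hT (j + 1) (by omega)) _ hZ i h1 (by omega) e'
    rw [← he', h0, Ext.comp_zero]

/-- Extension along `ι j` when the obstruction vanishes. -/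
lemma extend_of_comp (T : ExactExtension C n) {Z : C} (j : ℕ) (a : T.K j ⟶ Z)
    (h : (T.shortExact j).extClass.comp (Ext.mk₀ a) (add_zero 1) = 0) :
    ∃ b : T.Y (j + 1) ⟶ Z, T.ι j ≫ b = a := by
  obtain ⟨e, he⟩ := Ext.contravariant_sequence_exact₁ (T.shortExact j) Z (Ext.mk₀ a)
      (n₁ := 1) (by omega) h
  obtain ⟨b, rfl⟩ := (Ext.mk₀_bijective _ _).surjective e
  refine ⟨b, ?_⟩
  apply (Ext.mk₀_bijective _ _).injective
  rw [← he, ← Ext.mk₀_comp_mk₀]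

lemma extend_mid (hV : ExtVan.{w} n M) (T : ExactExtension C n) (hT : ∀ i ≤ n + 1, T.Y i ∈ M)
    {Z : C} (hZ : Z ∈ M) (j : ℕ) (h1 : 1 ≤ j) (h2 : j < n) (a : T.K j ⟶ Z) :
    ∃ b : T.Y (j + 1) ⟶ Z, T.ι j ≫ b = a :=
  extend_of_comp T j a
    (ext_K_van hV T hT hZ (n - (j + 1)) (j + 1) (by omega) 1 le_rfl (by omega) _)

lemma extend_zero (hV : ExtVan.{w} n M) (hn : 1 ≤ n) (T : ExactExtension C n)
    (hT : ∀ i ≤ n + 1, T.Y i ∈ M) {Z : C} (hZ : Z ∈ M) (a : T.K 0 ⟶ Z)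
    (h : (T.chainClass n).comp (Ext.mk₀ a) (add_zero n) = 0) :
    ∃ b : T.Y 1 ⟶ Z, T.ι 0 ≫ b = a := by
  have key : ∀ k j : ℕ, j + 1 + k = n →
      (T.chainClass (j + 1)).comp (Ext.mk₀ a) (add_zero (j + 1)) = 0 := by
    intro k
    induction k with
    | zero => intro j hj; obtain rfl : n = j + 1 := by omega
              exact h
    | succ k ih =>
      intro j hj
      have h3 := ih (j + 1) (by omega)
      rw [ExactExtension.chainClass, Ext.comp_assoc_of_third_deg_zero] at h3
      obtain ⟨e', he'⟩ := Ext.contravariant_sequence_exact₁ (T.shortExact (j + 1)) Z _ _ h3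
      have h0 : e' = 0 := hV _ (hT (j + 2) (by omega)) _ hZ (j + 1) (by omega) (by omega) e'
      rw [← he', h0, Ext.comp_zero]
  have h1 := key (n - 1) 0 (by omega)
  rw [ExactExtension.chainClass, ExactExtension.chainClass] at h1
  refine extend_of_comp T 0 a ?_
  simpa using h1

lemma chain_inj (hV : ExtVan.{w} n M) (T : ExactExtension C n)
    (hT : ∀ i ≤ n + 1, T.Y i ∈ M) {W : C} (hW : W ∈ M) :
    ∀ j i : ℕ, ∀ h : i + j = n, 1 ≤ i → ∀ e : Ext W (T.K j) i,
      e.comp (T.chainClass j) h = 0 → e = 0 := by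
  intro j
  induction j with
  | zero =>
    intro i h h1 e he
    obtain rfl : i = n := by omega
    rw [ExactExtension.chainClass] at he
    simpa using he
  | succ j ih =>
    intro i h h1 e he
    rw [ExactExtension.chainClass, ← Ext.comp_assoc (a₁₂ := i + 1) _ _ _ rfl (by omega)
      (by omega)] at he
    have h2 := ih (i + 1) (by omega) (by omega) _ he
    obtain ⟨e', he'⟩ := Ext.covariant_sequence_exact₃ W (T.shortExact j) e rfl h2
    have h0 : e' = 0 := hV _ hW _ (hT (j + 1) (by omega)) i h1 (by omega) e'
    rw [← he', h0, Ext.zero_comp]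

lemma lift_last (hV : ExtVan.{w} n M) (m : ℕ) (hm : n = m + 1) (T : ExactExtension C n)
    (hT : ∀ i ≤ n + 1, T.Y i ∈ M) {W : C} (hW : W ∈ M) (b : W ⟶ T.K (m + 1))
    (h : (Ext.mk₀ b).comp (T.chainClass (m + 1)) (zero_add (m + 1)) = 0) :
    ∃ c : W ⟶ T.Y (m + 1), c ≫ T.π (m + 1) = b := by
  subst hm
  rw [ExactExtension.chainClass, ← Ext.comp_assoc (a₁₂ := 1) _ _ _ rfl (by omega)
      (by omega)] at h
  have h2 := chain_inj hV T hT hW m 1 (by omega) le_rfl _ h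
  obtain ⟨e, he⟩ := Ext.covariant_sequence_exact₃ W (T.shortExact m) (Ext.mk₀ b) rfl h2
  obtain ⟨c, rfl⟩ := (Ext.mk₀_bijective _ _).surjective e
  refine ⟨c, ?_⟩
  apply (Ext.mk₀_bijective _ _).injective
  rw [← he, ← Ext.mk₀_comp_mk₀]

lemma nat_step (T U : ExactExtension C n) (j : ℕ) (a : T.K j ⟶ U.K j)
    (b : T.Y (j + 1) ⟶ U.Y (j + 1)) (c : T.K (j + 1) ⟶ U.K (j + 1))
    (h1 : T.ι j ≫ b = a ≫ U.ι j) (h2 : T.π (j + 1) ≫ c = b ≫ U.π (j + 1)) :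
    (T.shortExact j).extClass.comp (Ext.mk₀ a) (add_zero 1) =
      (Ext.mk₀ c).comp (U.shortExact j).extClass (zero_add 1) :=
  ShortComplex.ShortExact.extClass_naturality (T.shortExact j) (U.shortExact j)
    { τ₁ := a, τ₂ := b, τ₃ := c, comm₁₂ := h1.symm, comm₂₃ := h2.symm }

lemma chain_nat (T U : ExactExtension C n) (h : ∀ i, T.K i ⟶ U.K i)
    (f : ∀ i, T.Y (i + 1) ⟶ U.Y (i + 1)) (j : ℕ)
    (hf : ∀ i < j, T.ι i ≫ f i = h i ≫ U.ι i ∧ T.π (i + 1) ≫ h (i + 1) = f i ≫ U.π (i + 1)) :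
    (T.chainClass j).comp (Ext.mk₀ (h 0)) (add_zero j) =
      (Ext.mk₀ (h j)).comp (U.chainClass j) (zero_add j) := by
  induction j with
  | zero => simp [ExactExtension.chainClass]
  | succ j ih =>
    rw [ExactExtension.chainClass, ExactExtension.chainClass, Ext.comp_assoc_of_third_deg_zero,
      ih (fun i hi => hf i (by omega)), ← Ext.comp_assoc_of_second_deg_zero,
      nat_step T U j (h j) (f j) (h (j + 1)) (hf j (by omega)).1 (hf j (by omega)).2,
      Ext.comp_assoc _ _ _ _ _ (by omega)]

lemma exists_maps (hV : ExtVan.{w} n M) (hn : 1 ≤ n) (T U : ExactExtension C n)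
    (hT : ∀ i ≤ n + 1, T.Y i ∈ M) (hU : ∀ i ≤ n + 1, U.Y i ∈ M)
    (k0 : T.K 0 ⟶ U.K 0) (kn : T.K n ⟶ U.K n)
    (hk : (T.chainClass n).comp (Ext.mk₀ k0) (add_zero n) =
      (Ext.mk₀ kn).comp (U.chainClass n) (zero_add n)) :
    ∀ j ≤ n, ∃ (h : ∀ i, T.K i ⟶ U.K i) (f : ∀ i, T.Y (i + 1) ⟶ U.Y (i + 1)), h 0 = k0 ∧
      ∀ i < j, T.ι i ≫ f i = h i ≫ U.ι i ∧ T.π (i + 1) ≫ h (i + 1) = f i ≫ U.π (i + 1) := by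
  intro j
  induction j with
  | zero =>
    intro _
    let z : ∀ i, T.K i ⟶ U.K i := fun _ => 0
    exact ⟨Function.update z 0 k0, fun _ => 0, Function.update_self _ _ _,
      fun i hi => absurd hi (by omega)⟩
  | succ j ih =>
    intro hj
    obtain ⟨h, f, h0, hf⟩ := ih (by omega)
    have hb : ∃ b : T.Y (j + 1) ⟶ U.Y (j + 1), T.ι j ≫ b = h j ≫ U.ι j := by
      rcases Nat.eq_zero_or_pos j with rfl | hpos
      · refine extend_zero hV hn T hT (hU _ (by omega)) _ ?_
        rw [h0, ← Ext.mk₀_comp_mk₀, ← Ext.comp_assoc_of_third_deg_zero, hk,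
          Ext.comp_assoc_of_third_deg_zero]
        have hz : ∀ k, 1 ≤ k → (U.chainClass k).comp (Ext.mk₀ (U.ι 0)) (add_zero k) = 0 := by
          intro k hk1
          induction k, hk1 using Nat.le_induction with
          | base =>
            rw [ExactExtension.chainClass, ExactExtension.chainClass]
            have := (U.shortExact 0).extClass_comp
            simpa using this
          | succ k hk1 ihk =>
            rw [ExactExtension.chainClass, Ext.comp_assoc_of_third_deg_zero, ihk, Ext.comp_zero]
        rw [hz n hn, Ext.comp_zero]
      · exact extend_mid hV T hT (hU _ (by omega)) j hpos (by omega) _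
    obtain ⟨b, hb⟩ := hb
    haveI : Epi (ShortComplex.mk (T.ι j) (T.π (j + 1)) (T.zero j)).g := epi_pi T j
    obtain ⟨c, hc⟩ := (T.shortExact j).exact.desc' (b ≫ U.π (j + 1)) (by
      change T.ι j ≫ b ≫ U.π (j + 1) = 0
      rw [← Category.assoc, hb, Category.assoc, U.zero, comp_zero])
    refine ⟨Function.update h (j + 1) c, Function.update f j b, ?_, ?_⟩
    · rw [Function.update_of_ne (by omega), h0]
    · intro i hi
      rcases Nat.lt_succ_iff_lt_or_eq.1 hi with hi | rfl
      · rw [Function.update_of_ne (by omega), Function.update_of_ne (by omega),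
          Function.update_of_ne (by omega)]
        exact hf i hi
      · rw [Function.update_self, Function.update_self, Function.update_of_ne (by omega)]
        exact ⟨hb, hc⟩

lemma exists_maps' (hV : ExtVan.{w} n M) (hn : 1 ≤ n) (T U : ExactExtension C n)
    (hT : ∀ i ≤ n + 1, T.Y i ∈ M) (hU : ∀ i ≤ n + 1, U.Y i ∈ M)
    (k0 : T.K 0 ⟶ U.K 0) (kn : T.K n ⟶ U.K n)
    (hk : (T.chainClass n).comp (Ext.mk₀ k0) (add_zero n) =
      (Ext.mk₀ kn).comp (U.chainClass n) (zero_add n)) :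
    ∃ (h : ∀ i, T.K i ⟶ U.K i) (f : ∀ i, T.Y (i + 1) ⟶ U.Y (i + 1)), h 0 = k0 ∧ h n = kn ∧
      ∀ i < n, T.ι i ≫ f i = h i ≫ U.ι i ∧ T.π (i + 1) ≫ h (i + 1) = f i ≫ U.π (i + 1) := by
  obtain ⟨h, f, h0, hf⟩ := exists_maps hV hn T U hT hU k0 kn hk n le_rfl
  have h1 := chain_nat T U h f n hf
  rw [h0, hk] at h1
  obtain ⟨m, rfl⟩ : ∃ m, n = m + 1 := ⟨n - 1, by omega⟩
  obtain ⟨c, hc⟩ := lift_last hV m rfl U hU (Kn_mem T hT) (h (m + 1) - kn) (by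
    rw [sub_eq_add_neg, Ext.mk₀_add, Ext.mk₀_neg, Ext.add_comp, Ext.neg_comp, h1,
      add_neg_cancel])
  refine ⟨Function.update h (m + 1) kn, Function.update f m (f m - T.π (m + 1) ≫ c), ?_, ?_, ?_⟩
  · rw [Function.update_of_ne (by omega), h0]
  · rw [Function.update_self]
  · intro i hi
    rcases Nat.lt_succ_iff_lt_or_eq.1 hi with hi' | rfl
    · rw [Function.update_of_ne (by omega), Function.update_of_ne (by omega),
        Function.update_of_ne (by omega)]
      exact hf i hi
    · rw [Function.update_self, Function.update_self, Function.update_of_ne (by omega)]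
      obtain ⟨ha, hb⟩ := hf i hi
      constructor
      · rw [Preadditive.comp_sub, ha, ← Category.assoc, T.zero, zero_comp, sub_zero]
      · rw [Preadditive.sub_comp, Category.assoc, hc, Preadditive.comp_sub, hb]
        abel

lemma chain_of_class (T U : ExactExtension C n)
    (e0 : T.Y 0 = U.Y 0) (e1 : T.Y (n + 1) = U.Y (n + 1))
    (hclass : extTransport T.extClass e1 e0 = U.extClass) :
    (T.chainClass n).comp (Ext.mk₀ (eqToHom (T.hK0.trans (e0.trans U.hK0.symm)))) (add_zero n) =
      (Ext.mk₀ (eqToHom (T.hKm.trans (e1.trans U.hKm.symm)))).comp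
        (U.chainClass n) (zero_add n) := by
  have h := congrArg (fun e => (Ext.mk₀ (eqToHom (T.hKm.trans e1))).comp
    (e.comp (Ext.mk₀ (eqToHom U.hK0.symm)) (add_zero n)) (zero_add n)) hclass
  simpa [extTransport, ExactExtension.extClass, Ext.comp_assoc_of_third_deg_zero] using h

lemma exists_chain_map (hV : ExtVan.{w} n M) (hn : 1 ≤ n) (T U : ExactExtension C n)
    (hT : ∀ i ≤ n + 1, T.Y i ∈ M) (hU : ∀ i ≤ n + 1, U.Y i ∈ M)
    (e0 : T.Y 0 = U.Y 0) (e1 : T.Y (n + 1) = U.Y (n + 1))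
    (hclass : extTransport T.extClass e1 e0 = U.extClass) :
    ∃ f : ∀ i, T.Y i ⟶ U.Y i,
      (∀ i ≤ n, T.d i ≫ f (i + 1) = f i ≫ U.d i) ∧
      f 0 = eqToHom e0 ∧ f (n + 1) = eqToHom e1 := by
  obtain ⟨h, f, h0, h1, hf⟩ := exists_maps' hV hn T U hT hU _ _
    (chain_of_class T U e0 e1 hclass)
  let F : ∀ i, T.Y i ⟶ U.Y i := fun i => match i with
    | 0 => eqToHom e0
    | i + 1 => Function.update f n (eqToHom e1) i
  have hF0 : F 0 = eqToHom e0 := rfl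
  have hFs : ∀ i, F (i + 1) = Function.update f n (eqToHom e1) i := fun _ => rfl
  have hFn : F (n + 1) = eqToHom e1 := by rw [hFs, Function.update_self]
  have hFi : ∀ i < n, F (i + 1) = f i := fun i hi => by
    rw [hFs, Function.update_of_ne (by omega)]
  refine ⟨F, ?_, hF0, hFn⟩
  intro i hi
  rcases Nat.eq_zero_or_pos i with rfl | hpos
  · rw [hF0, hFi 0 (by omega), ← cancel_epi (eqToHom T.hK0), ← Category.assoc, T.d0_eq,
      (hf 0 (by omega)).1, h0, ← U.d0_eq]
    simp
  · obtain ⟨j, rfl⟩ : ∃ j, i = j + 1 := ⟨i - 1, by omega⟩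
    rw [hFi j (by omega)]
    rcases Nat.lt_or_eq_of_le hi with hlt | heq
    · rw [hFi (j + 1) hlt, T.dmid_eq _ hpos hlt, U.dmid_eq _ hpos hlt, Category.assoc,
        (hf (j + 1) hlt).1, ← Category.assoc, (hf j (by omega)).2, Category.assoc]
    · subst heq
      rw [hFn, T.dlast_eq, U.dlast_eq, ← Category.assoc, ← (hf j (by omega)).2, h1]
      simp

lemma d_comp_d (T : ExactExtension C n) (i : ℕ) (hi : i < n) : T.d i ≫ T.d (i + 1) = 0 := by
  have hr : T.ι i ≫ T.d (i + 1) = 0 := by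
    rcases Nat.lt_or_eq_of_le (Nat.succ_le_of_lt hi) with hlt | heq
    · rw [T.dmid_eq (i + 1) (by omega) hlt, ← Category.assoc, T.zero, zero_comp]
    · subst heq
      have := T.dlast_eq
      simp only [Nat.succ_eq_add_one] at this
      rw [this, ← Category.assoc, T.zero, zero_comp]
  rcases Nat.eq_zero_or_pos i with rfl | hpos
  · rw [← cancel_epi (eqToHom T.hK0), ← Category.assoc, T.d0_eq, hr, comp_zero]
  · rw [T.dmid_eq i hpos hi, Category.assoc, hr, comp_zero]

lemma factor_d (hV : ExtVan.{w} n M) (T : ExactExtension C n) (hT : ∀ i ≤ n + 1, T.Y i ∈ M)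
    {Z : C} (hZ : Z ∈ M) (j : ℕ) (hj : j < n) (p : T.Y (j + 1) ⟶ Z) (hp : T.d j ≫ p = 0) :
    ∃ s : T.Y (j + 2) ⟶ Z, T.d (j + 1) ≫ s = p := by
  have h1 : T.ι j ≫ p = 0 := by
    rcases Nat.eq_zero_or_pos j with rfl | hpos
    · rw [← T.d0_eq, Category.assoc, hp, comp_zero]
    · rw [T.dmid_eq j hpos hj] at hp
      obtain ⟨i, rfl⟩ : ∃ i, j = i + 1 := ⟨j - 1, by omega⟩
      haveI := epi_pi T i
      rw [← cancel_epi (T.π (i + 1)), ← Category.assoc, hp, comp_zero]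
  haveI : Epi (ShortComplex.mk (T.ι j) (T.π (j + 1)) (T.zero j)).g := epi_pi T j
  obtain ⟨c, hc⟩ := (T.shortExact j).exact.desc' p h1
  change T.π (j + 1) ≫ c = p at hc
  rcases Nat.lt_or_eq_of_le (Nat.succ_le_of_lt hj) with hlt | heq
  · obtain ⟨s, hs⟩ := extend_mid hV T hT hZ (j + 1) (by omega) hlt c
    exact ⟨s, by rw [T.dmid_eq (j + 1) (by omega) hlt, Category.assoc, hs, hc]⟩
  · subst heq
    refine ⟨eqToHom T.hKm.symm ≫ c, ?_⟩
    have := T.dlast_eq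
    simp only [Nat.succ_eq_add_one] at this
    rw [this, ← hc]
    simp

lemma epi_d_last (hn : 1 ≤ n) (T : ExactExtension C n) : Epi (T.d n) := by
  obtain ⟨m, rfl⟩ : ∃ m, n = m + 1 := ⟨n - 1, by omega⟩
  rw [T.dlast_eq]
  haveI := epi_pi T m
  infer_instance

lemma exists_homotopy (hV : ExtVan.{w} n M) (hn : 1 ≤ n) (T : ExactExtension C n)
    (hT : ∀ i ≤ n + 1, T.Y i ∈ M) (p : ∀ i, T.Y i ⟶ T.Y i)
    (hp : ∀ i ≤ n, T.d i ≫ p (i + 1) = p i ≫ T.d i) (hp0 : p 0 = 0) :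
    ∃ s : ∀ i, T.Y (i + 1) ⟶ T.Y i,
      p 0 = T.d 0 ≫ s 0 ∧
      (∀ i < n, p (i + 1) = T.d (i + 1) ≫ s (i + 1) + s i ≫ T.d i) ∧
      p (n + 1) = s n ≫ T.d n := by
  have key : ∀ j ≤ n, ∃ s : ∀ i, T.Y (i + 1) ⟶ T.Y i, s 0 = 0 ∧
      ∀ i < j, p (i + 1) = T.d (i + 1) ≫ s (i + 1) + s i ≫ T.d i := by
    intro j
    induction j with
    | zero => intro _; exact ⟨fun _ => 0, rfl, by simp⟩
    | succ j ih =>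
      intro hj
      obtain ⟨s, s0, hs⟩ := ih (by omega)
      obtain ⟨t, ht⟩ := factor_d hV T hT (hT (j + 1) (by omega)) j (by omega)
        (p (j + 1) - s j ≫ T.d j) (by
          rw [Preadditive.comp_sub, hp j (by omega)]
          rcases Nat.eq_zero_or_pos j with rfl | hpos
          · rw [hp0, s0]; simp
          · obtain ⟨i, rfl⟩ : ∃ i, j = i + 1 := ⟨j - 1, by omega⟩
            rw [hs i (by omega), Preadditive.add_comp, Category.assoc, Category.assoc,
              d_comp_d T i (by omega), comp_zero, add_zero, sub_self])
      refine ⟨Function.update s (j + 1) t, ?_, ?_⟩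
      · rw [Function.update_of_ne (by omega), s0]
      · intro i hi
        rcases Nat.lt_succ_iff_lt_or_eq.1 hi with hi | rfl
        · rw [Function.update_of_ne (by omega), Function.update_of_ne (by omega)]
          exact hs i hi
        · rw [Function.update_self, Function.update_of_ne (by omega), ht]
          abel
  obtain ⟨s, s0, hs⟩ := key n le_rfl
  refine ⟨s, by rw [hp0, s0, comp_zero], hs, ?_⟩
  haveI := epi_d_last hn T
  rw [← cancel_epi (T.d n), hp n le_rfl]
  obtain ⟨m, rfl⟩ : ∃ m, n = m + 1 := ⟨n - 1, by omega⟩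
  rw [hs m (by omega), Preadditive.add_comp, Category.assoc, Category.assoc,
    d_comp_d T m (by omega), comp_zero, add_zero]

lemma transport_symm {X X' Z Z' : C} {a : ℕ} (e : Ext X Z a) (e' : Ext X' Z' a)
    (hX : X = X') (hZ : Z = Z') (h : extTransport e hX hZ = e') :
    extTransport e' hX.symm hZ.symm = e := by
  subst hX hZ h
  simp [extTransport]

lemma exists_homotopy' (hV : ExtVan.{w} n M) (hn : 1 ≤ n) (T U : ExactExtension C n)
    (hT : ∀ i ≤ n + 1, T.Y i ∈ M) (f : ∀ i, T.Y i ⟶ U.Y i) (g : ∀ i, U.Y i ⟶ T.Y i)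
    (hf : ∀ i ≤ n, T.d i ≫ f (i + 1) = f i ≫ U.d i)
    (hg : ∀ i ≤ n, U.d i ≫ g (i + 1) = g i ≫ T.d i) (h0 : f 0 ≫ g 0 = 𝟙 _) :
    ∃ s : ∀ i, T.Y (i + 1) ⟶ T.Y i,
          f 0 ≫ g 0 - 𝟙 (T.Y 0) = T.d 0 ≫ s 0 ∧
          (∀ i < n, f (i + 1) ≫ g (i + 1) - 𝟙 (T.Y (i + 1)) =
            T.d (i + 1) ≫ s (i + 1) + s i ≫ T.d i) ∧
          f (n + 1) ≫ g (n + 1) - 𝟙 (T.Y (n + 1)) = s n ≫ T.d n := by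
  refine exists_homotopy hV hn T hT (fun i => f i ≫ g i - 𝟙 (T.Y i)) ?_ ?_
  · intro i hi
    simp only [Preadditive.comp_sub, Preadditive.sub_comp, Category.comp_id, Category.id_comp,
      Category.assoc]
    rw [← hg i hi, ← Category.assoc, hf i hi, Category.assoc]
  · simp [h0]

end Helpers

/-- Let `𝓔` be an abelian category, `n ≥ 1`, `M` an `n`-cluster tilting
subcategory of `𝓔`, and let `T`, `U` be two `n`-exact sequences in `M` with the same end terms
and equal Yoneda classes in `Extⁿ(X^{n+1},X⁰)`.  Then `T` and `U` are homotopy equivalent via a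
morphism of complexes which is the identity on both end terms. -/
theorem homotopy_equivalent_of_eq_extClass
    {C : Type u} [Category.{v} C] [Abelian C] [HasExt.{w} C]
    (n : ℕ) (hn : 1 ≤ n) (M : Set C) (hM : IsNClusterTilting n M)
    (T U : ExactExtension C n)
    (hT : ∀ i ≤ n + 1, T.Y i ∈ M) (hU : ∀ i ≤ n + 1, U.Y i ∈ M)
    (e0 : T.Y 0 = U.Y 0) (e1 : T.Y (n + 1) = U.Y (n + 1))
    (hclass : extTransport T.extClass e1 e0 = U.extClass) :
    ∃ f : ∀ i, T.Y i ⟶ U.Y i,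
      (∀ i ≤ n, T.d i ≫ f (i + 1) = f i ≫ U.d i) ∧
      f 0 = eqToHom e0 ∧ f (n + 1) = eqToHom e1 ∧
      ∃ g : ∀ i, U.Y i ⟶ T.Y i,
        (∀ i ≤ n, U.d i ≫ g (i + 1) = g i ≫ T.d i) ∧
        (∃ s : ∀ i, T.Y (i + 1) ⟶ T.Y i,
          f 0 ≫ g 0 - 𝟙 (T.Y 0) = T.d 0 ≫ s 0 ∧
          (∀ i < n, f (i + 1) ≫ g (i + 1) - 𝟙 (T.Y (i + 1)) =
            T.d (i + 1) ≫ s (i + 1) + s i ≫ T.d i) ∧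
          f (n + 1) ≫ g (n + 1) - 𝟙 (T.Y (n + 1)) = s n ≫ T.d n) ∧
        (∃ t : ∀ i, U.Y (i + 1) ⟶ U.Y i,
          g 0 ≫ f 0 - 𝟙 (U.Y 0) = U.d 0 ≫ t 0 ∧
          (∀ i < n, g (i + 1) ≫ f (i + 1) - 𝟙 (U.Y (i + 1)) =
            U.d (i + 1) ≫ t (i + 1) + t i ≫ U.d i) ∧
          g (n + 1) ≫ f (n + 1) - 𝟙 (U.Y (n + 1)) = t n ≫ U.d n) := by
  have hV : ExtVan.{w} n M := fun X hX Y hY i h1 h2 e => (hM.2.2.2.1 X).1 hX Y hY i h1 h2 e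
  obtain ⟨f, hf, f0, f1⟩ := exists_chain_map hV hn T U hT hU e0 e1 hclass
  obtain ⟨g, hg, g0, g1⟩ := exists_chain_map hV hn U T hU hT e0.symm e1.symm
    (transport_symm _ _ e1 e0 hclass)
  exact ⟨f, hf, f0, f1, g, hg, exists_homotopy' hV hn T U hT f g hf hg (by simp [f0, g0]),
    exists_homotopy' hV hn U T hU g f hg hf (by simp [f0, g0])⟩

end NZPaper
end
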